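/- arXiv:2203.12850 — 5 statements merged into one kernel-verified Lean document; each statement's English description precedes it below -/
import Mathlib

section
/- Let r ≥ 1 be a natural number and let λ : Fin r → ℝ satisfy λ_k > 0 for all k and ∑_k λ_k = 1. Then r(r−1) · ∑_{k ≠ m} λ_k λ_m ≥ ((∑_k √(λ_k))² − 1)², where the sum ∑_{k ≠ m} runs over all ordered pairs (k,m) with k ≠ m. -/
/-!
Since `∑ k, l k = 1`, expanding the square gives
`(∑ k, √(l k)) ^ 2 - 1 = ∑_{k ≠ m} √(l k) * √(l m)`, a sum over the `r * (r - 1)` off-diagonal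
pairs. The Cauchy–Schwarz inequality against the constant `1` on these pairs is the claim.
-/

lemma sum_sum_ite_ne_eq_sum_offDiag {r : ℕ} (f : Fin r → ℝ) :
    (∑ k, ∑ m, if k ≠ m then f k * f m else 0)
      = ∑ p ∈ (Finset.univ : Finset (Fin r)).offDiag, f p.1 * f p.2 := by
  rw [← Finset.sum_product', ← Finset.sum_filter]
  refine Finset.sum_congr ?_ fun _ _ => rfl
  ext p
  simp

lemma sq_sum_eq_sum_sq_add_sum_offDiag {r : ℕ} (f : Fin r → ℝ) :
    (∑ k, f k) ^ 2 = ∑ k, f k ^ 2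
      + ∑ p ∈ (Finset.univ : Finset (Fin r)).offDiag, f p.1 * f p.2 := by
  rw [← sum_sum_ite_ne_eq_sum_offDiag, ← Finset.sum_add_distrib, sq, Finset.sum_mul_sum]
  refine Finset.sum_congr rfl fun k _ => ?_
  have h : f k ^ 2 = ∑ m, if k = m then f k * f m else 0 := by simp [sq]
  rw [h, ← Finset.sum_add_distrib]
  refine Finset.sum_congr rfl fun m _ => ?_
  by_cases hkm : k = m <;> simp [hkm]

theorem offdiag_sum_ge_negativity_sq (r : ℕ) (hr : 1 ≤ r) (l : Fin r → ℝ)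
    (hpos : ∀ k, 0 < l k) (hsum : ∑ k, l k = 1) :
    (r : ℝ) * ((r : ℝ) - 1) * (∑ k, ∑ m, if k ≠ m then l k * l m else 0)
      ≥ ((∑ k, Real.sqrt (l k)) ^ 2 - 1) ^ 2 := by
  have hsq : ∀ k, Real.sqrt (l k) ^ 2 = l k := fun k => Real.sq_sqrt (hpos k).le
  have hcard : (((Finset.univ : Finset (Fin r)).offDiag.card : ℕ) : ℝ) = r * ((r : ℝ) - 1) := by
    rw [Finset.offDiag_card, Finset.card_univ, Fintype.card_fin,
      Nat.cast_sub (Nat.le_mul_self r)]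
    push_cast
    ring
  have hcs := sq_sum_le_card_mul_sum_sq (s := (Finset.univ : Finset (Fin r)).offDiag)
    (f := fun p => Real.sqrt (l p.1) * Real.sqrt (l p.2))
  simp only [mul_pow, hsq, hcard] at hcs
  rw [sum_sum_ite_ne_eq_sum_offDiag, sq_sum_eq_sum_sq_add_sum_offDiag]
  simp only [hsq, hsum, add_sub_cancel_left]
  exact hcs
end

section
/- Let d, r be natural numbers with 2 ≤ r ≤ d and let λ : Fin r → ℝ satisfy λ_k > 0 for all k and ∑_k λ_k = 1. Define the concurrence C(λ) = √((d/(d−1)) · (1 − ∑_k λ_k²)) and the negativity N(λ) = ((∑_k √(λ_k))² − 1)/2. Then C(λ) ≥ 2 · √(d/((d−1) · r · (r−1))) · N(λ). -/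
/-!
Since `∑ λ_k = 1`, both sides are sums over ordered pairs `k ≠ m`:
`(∑ √λ_k)² - 1 = ∑_{k≠m} √λ_k √λ_m` and `1 - ∑ λ_k² = ∑_{k≠m} λ_k λ_m`
(`sum_offDiag_mul`). There are `r (r - 1)` such pairs, so Cauchy–Schwarz bounds the square of the
first sum by `r (r - 1)` times the second; scaling by `d / ((d - 1) r (r - 1))` and taking square
roots gives the inequality.
-/

lemma sum_offDiag_mul {r : ℕ} (f : Fin r → ℝ) :
    ∑ p ∈ (Finset.univ : Finset (Fin r)).offDiag, f p.1 * f p.2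
      = (∑ k, f k) ^ 2 - ∑ k, f k ^ 2 := by
  have h := Finset.sum_union (f := fun p : Fin r × Fin r => f p.1 * f p.2)
    (Finset.disjoint_diag_offDiag (Finset.univ : Finset (Fin r)))
  rw [Finset.diag_union_offDiag, Finset.sum_product, Finset.sum_diag] at h
  rw [sq, Finset.sum_mul_sum, h]
  simp [sq]

theorem concurrence_ge_negativity (d r : ℕ) (hr : 2 ≤ r) (hrd : r ≤ d)
    (l : Fin r → ℝ) (hpos : ∀ k, 0 < l k) (hsum : ∑ k, l k = 1) :
    Real.sqrt (((d : ℝ) / ((d : ℝ) - 1)) * (1 - ∑ k, (l k) ^ 2))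
      ≥ 2 * Real.sqrt ((d : ℝ) / (((d : ℝ) - 1) * (r : ℝ) * ((r : ℝ) - 1)))
          * (((∑ k, Real.sqrt (l k)) ^ 2 - 1) / 2) := by
  have hsq : ∀ k, Real.sqrt (l k) ^ 2 = l k := fun k => Real.sq_sqrt (hpos k).le
  have hcs : ((∑ k, Real.sqrt (l k)) ^ 2 - 1) ^ 2
      ≤ ((r : ℝ) * ((r : ℝ) - 1)) * (1 - ∑ k, (l k) ^ 2) := by
    have h := sq_sum_le_card_mul_sum_sq (s := (Finset.univ : Finset (Fin r)).offDiag)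
      (f := fun p => Real.sqrt (l p.1) * Real.sqrt (l p.2))
    simp only [mul_pow, hsq] at h
    rw [sum_offDiag_mul (fun k => Real.sqrt (l k)), sum_offDiag_mul l, hsum,
      Finset.offDiag_card, Finset.card_univ, Fintype.card_fin,
      Nat.cast_sub (Nat.le_mul_self r)] at h
    simp only [hsq, hsum, one_pow, Nat.cast_mul] at h
    linarith
  have hr' : (2 : ℝ) ≤ r := by exact_mod_cast hr
  have hd' : (2 : ℝ) ≤ d := by exact_mod_cast hr.trans hrd
  have hd1 : (0 : ℝ) < d - 1 := by linarith
  have hr1 : (0 : ℝ) < r - 1 := by linarith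
  have hA : (0 : ℝ) ≤ (d : ℝ) / (((d : ℝ) - 1) * (r : ℝ) * ((r : ℝ) - 1)) := by positivity
  refine le_trans (le_abs_self _) (Real.abs_le_sqrt ?_)
  calc _ = (d : ℝ) / (((d : ℝ) - 1) * (r : ℝ) * ((r : ℝ) - 1))
        * ((∑ k, Real.sqrt (l k)) ^ 2 - 1) ^ 2 := by
        rw [mul_pow, mul_pow, Real.sq_sqrt hA]; ring
    _ ≤ _ := mul_le_mul_of_nonneg_left hcs hA
    _ = _ := by field_simp
end

section
/- Let d ≥ 1 be a natural number and let λ : Fin d → ℝ satisfy λ_k ≥ 0 for all k and ∑_k λ_k = 1. Define the real symmetric matrix B indexed by (Fin d × Fin d) with entries B_{(k,m),(i,j)} = √(λ_k λ_m) if i = m and j = k, and B_{(k,m),(i,j)} = 0 otherwise. Then the sum over all indices of the absolute values of the eigenvalues of B equals (∑_k √(λ_k))². -/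
/-!
The square of the partial transpose `B` is the diagonal matrix with entries `λ_k λ_m`, because `B`
maps `e_m ⊗ e_k` to `√(λ_k λ_m) e_k ⊗ e_m`. Comparing characteristic polynomials of `B²`, the squares
of the eigenvalues of `B` are, with multiplicity, the numbers `λ_k λ_m`. Taking square roots,
the trace norm is `∑_{k,m} √λ_k √λ_m = (∑_k √λ_k)²`.
-/

/-- The partial transpose of the pure state `|ψ⟩⟨ψ|`, `ψ = ∑ √(λ k) e_k ⊗ e_k`,
in the product basis. -/
noncomputable def partialTransposeMat (d : ℕ) (l : Fin d → ℝ) :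
    Matrix (Fin d × Fin d) (Fin d × Fin d) ℝ :=
  fun p q => if q.1 = p.2 ∧ q.2 = p.1 then Real.sqrt (l p.1 * l p.2) else 0

lemma partialTransposeMat_sq (d : ℕ) (l : Fin d → ℝ) (hnonneg : ∀ k, 0 ≤ l k) :
    partialTransposeMat d l ^ 2 = Matrix.diagonal fun p : Fin d × Fin d => l p.1 * l p.2 := by
  ext p q
  rw [sq, Matrix.mul_apply, Finset.sum_eq_single (p.2, p.1)]
  · by_cases h : p = q
    · subst h
      simp [partialTransposeMat, mul_comm (l p.2),
        Real.mul_self_sqrt (mul_nonneg (hnonneg p.1) (hnonneg p.2))]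
    · rw [Matrix.diagonal_apply_ne _ h]
      have : ¬ (q.1 = p.1 ∧ q.2 = p.2) := fun h' => h (Prod.ext h'.1.symm h'.2.symm)
      simp [partialTransposeMat, this]
  · intro r _ hr
    have : ¬ (r.1 = p.2 ∧ r.2 = p.1) := fun h' => hr (Prod.ext h'.1 h'.2)
    simp [partialTransposeMat, this]
  · simp

/-- The squares of the eigenvalues of a real symmetric matrix are the roots, with multiplicity,
of the characteristic polynomial of its square. -/
lemma roots_charpoly_sq {n : Type*} [Fintype n] [DecidableEq n] {A : Matrix n n ℝ}
    (hA : A.IsHermitian) :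
    (A ^ 2).charpoly.roots = Finset.univ.val.map fun i => hA.eigenvalues i ^ 2 := by
  have h : (A ^ 2).charpoly
      = ∏ i, (Polynomial.X - Polynomial.C (hA.eigenvalues i ^ 2)) := by
    conv_lhs => rw [hA.spectral_theorem, ← map_pow, Unitary.conjStarAlgAut_apply,
      Matrix.charpoly_mul_comm, ← mul_assoc]
    simp [Matrix.diagonal_pow, Matrix.charpoly_diagonal]
  have h' := Polynomial.roots_multiset_prod_X_sub_C
    (Finset.univ.val.map fun i => hA.eigenvalues i ^ 2)
  rw [Multiset.map_map] at h'
  rw [h]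
  exact h'

theorem trace_norm_partial_transpose (d : ℕ) (hd : 1 ≤ d) (l : Fin d → ℝ)
    (hnonneg : ∀ k, 0 ≤ l k) (hsum : ∑ k, l k = 1)
    (hB : (partialTransposeMat d l).IsHermitian) :
    ∑ i, |hB.eigenvalues i| = (∑ k, Real.sqrt (l k)) ^ 2 := by
  have h := roots_charpoly_sq hB
  have hdiag : (Matrix.diagonal fun p : Fin d × Fin d => l p.1 * l p.2).charpoly.roots
      = Finset.univ.val.map fun p : Fin d × Fin d => l p.1 * l p.2 := by
    rw [Matrix.charpoly_diagonal]
    have h' := Polynomial.roots_multiset_prod_X_sub_C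
      (Finset.univ.val.map fun p : Fin d × Fin d => l p.1 * l p.2)
    rwa [Multiset.map_map] at h'
  rw [partialTransposeMat_sq d l hnonneg, hdiag] at h
  have h2 := congrArg (fun s => (s.map Real.sqrt).sum) h
  simp only [Multiset.map_map, Function.comp_def, Real.sqrt_sq_eq_abs] at h2
  calc ∑ i, |hB.eigenvalues i| = ∑ p : Fin d × Fin d, Real.sqrt (l p.1 * l p.2) := h2.symm
    _ = (∑ k, Real.sqrt (l k)) ^ 2 := by
      rw [sq, Finset.sum_mul_sum, Fintype.sum_prod_type]
      simp only [Real.sqrt_mul (hnonneg _)]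
end

section
/- For every α > 0, with λ₊(α) = (1+exp(−2α²))²/(2(1+exp(−4α²))) and λ₋(α) = (1−exp(−2α²))²/(2(1+exp(−4α²))), one has √(1 − λ₊(α)² − λ₋(α)²) = (1/√2) · (1 − exp(−4α²))/(1 + exp(−4α²)); in particular this quantity equals √2 · ((√(λ₊(α)) + √(λ₋(α)))² − 1)/2. -/
/-!
With `x = exp (-2 α²) ∈ (0, 1)` and `q = (1 - x²) / (1 + x²) > 0`, the two coefficients satisfy
`λ₊ + λ₋ = 1` and `λ₊ λ₋ = (q / 2)²`. Hence `1 - λ₊² - λ₋² = 2 λ₊ λ₋ = q² / 2`, while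
`(√λ₊ + √λ₋)² - 1 = 2 √(λ₊ λ₋) = q`, so both claimed expressions equal `q / √2`.
-/

theorem concurrence_entangled_coherent (α : ℝ) (hα : 0 < α) :
    let lp := (1 + Real.exp (-2 * α ^ 2)) ^ 2 / (2 * (1 + Real.exp (-4 * α ^ 2)))
    let lm := (1 - Real.exp (-2 * α ^ 2)) ^ 2 / (2 * (1 + Real.exp (-4 * α ^ 2)))
    Real.sqrt (1 - lp ^ 2 - lm ^ 2)
        = (1 / Real.sqrt 2) *
            ((1 - Real.exp (-4 * α ^ 2)) / (1 + Real.exp (-4 * α ^ 2))) ∧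
    Real.sqrt (1 - lp ^ 2 - lm ^ 2)
        = Real.sqrt 2 * (((Real.sqrt lp + Real.sqrt lm) ^ 2 - 1) / 2) := by
  intro lp lm
  have hx4 : Real.exp (-4 * α ^ 2) = Real.exp (-2 * α ^ 2) ^ 2 := by
    rw [← Real.exp_nat_mul]
    congr 1
    push_cast
    ring
  have hx1 : Real.exp (-2 * α ^ 2) < 1 := by
    rw [Real.exp_lt_one_iff]
    nlinarith [pow_pos hα 2]
  have hx0 := Real.exp_pos (-2 * α ^ 2)
  have hlpx : lp = (1 + Real.exp (-2 * α ^ 2)) ^ 2 / (2 * (1 + Real.exp (-2 * α ^ 2) ^ 2)) := by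
    rw [← hx4]
  have hlmx : lm = (1 - Real.exp (-2 * α ^ 2)) ^ 2 / (2 * (1 + Real.exp (-2 * α ^ 2) ^ 2)) := by
    rw [← hx4]
  clear_value lp lm
  rw [hx4]
  generalize Real.exp (-2 * α ^ 2) = x at *
  set q := (1 - x ^ 2) / (1 + x ^ 2) with hq
  have hd : 0 < 1 + x ^ 2 := by positivity
  have hq0 : 0 ≤ q := div_nonneg (by nlinarith) hd.le
  have hlp : 0 ≤ lp := by rw [hlpx]; positivity
  have hlm : 0 ≤ lm := by rw [hlmx]; positivity
  have hsum : lp + lm = 1 := by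
    rw [hlpx, hlmx]
    field_simp
    ring
  have hprod : lp * lm = (q / 2) ^ 2 := by
    rw [hlpx, hlmx, hq]
    field_simp
    ring
  have hs2 : Real.sqrt 2 ^ 2 = 2 := Real.sq_sqrt (by norm_num)
  have hs0 : 0 < Real.sqrt 2 := by positivity
  have hconc : Real.sqrt (1 - lp ^ 2 - lm ^ 2) = 1 / Real.sqrt 2 * q := by
    have h : 1 - lp ^ 2 - lm ^ 2 = (1 / Real.sqrt 2 * q) ^ 2 := by
      rw [mul_pow, div_pow 1, hs2]
      linear_combination 2 * hprod - (lp + lm + 1) * hsum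
    rw [h, Real.sqrt_sq (by positivity)]
  have hneg : (Real.sqrt lp + Real.sqrt lm) ^ 2 - 1 = q := by
    have h : Real.sqrt lp * Real.sqrt lm = q / 2 := by
      rw [← Real.sqrt_mul hlp, hprod, Real.sqrt_sq (by positivity)]
    linear_combination Real.sq_sqrt hlp + Real.sq_sqrt hlm + 2 * h + hsum
  refine ⟨hconc, ?_⟩
  rw [hconc, hneg]
  field_simp
  rw [hs2, mul_comm]
end

section
/- For every α > 0, with λ₊(α) = (1+exp(−2α²))²/(2(1+exp(−4α²))) and λ₋(α) = (1−exp(−2α²))²/(2(1+exp(−4α²))), one has 2(√(λ₊(α)) + √(λ₋(α)))² − 1 = (3 − exp(−4α²))/(1 + exp(−4α²)), and this value lies strictly between 1 and 3. -/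
/-!
Write `x = exp (-2α²)` and `y = exp (-4α²)`, both in `(0, 1)`. Both radicands are squares over
`2 (1 + y)`, and `1 ± x > 0`, so the square roots are `(1 ± x) / √(2 (1 + y))` and their sum is
`2 / √(2 (1 + y))`. Hence the left-hand side is `4 / (1 + y) - 1 = (3 - y) / (1 + y)`, and
`0 < y < 1` puts this strictly between `1` and `3`.
-/

theorem bell_violation_bound_entangled_coherent (α : ℝ) (hα : 0 < α) :
    let lp := (1 + Real.exp (-2 * α ^ 2)) ^ 2 / (2 * (1 + Real.exp (-4 * α ^ 2)))
    let lm := (1 - Real.exp (-2 * α ^ 2)) ^ 2 / (2 * (1 + Real.exp (-4 * α ^ 2)))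
    2 * (Real.sqrt lp + Real.sqrt lm) ^ 2 - 1
        = (3 - Real.exp (-4 * α ^ 2)) / (1 + Real.exp (-4 * α ^ 2)) ∧
    1 < (3 - Real.exp (-4 * α ^ 2)) / (1 + Real.exp (-4 * α ^ 2)) ∧
    (3 - Real.exp (-4 * α ^ 2)) / (1 + Real.exp (-4 * α ^ 2)) < 3 := by
  intro lp lm
  have hx1 : Real.exp (-2 * α ^ 2) < 1 := Real.exp_lt_one_iff.mpr (by nlinarith [pow_pos hα 2])
  have hx0 := Real.exp_pos (-2 * α ^ 2)
  have hy1 : Real.exp (-4 * α ^ 2) < 1 := Real.exp_lt_one_iff.mpr (by nlinarith [pow_pos hα 2])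
  have hy0 := Real.exp_pos (-4 * α ^ 2)
  have hp : Real.sqrt lp
      = (1 + Real.exp (-2 * α ^ 2)) / Real.sqrt (2 * (1 + Real.exp (-4 * α ^ 2))) := by
    rw [Real.sqrt_div (sq_nonneg _), Real.sqrt_sq (by linarith)]
  -- `exp (-2α²) < 1` fixes the sign of the root of the second numerator.
  have hm : Real.sqrt lm
      = (1 - Real.exp (-2 * α ^ 2)) / Real.sqrt (2 * (1 + Real.exp (-4 * α ^ 2))) := by
    rw [Real.sqrt_div (sq_nonneg _), Real.sqrt_sq (by linarith)]
  refine ⟨?_, ?_, ?_⟩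
  · -- The exponentials cancel in the sum of the roots, leaving `2 / √(2 (1 + exp (-4α²)))`.
    rw [hp, hm, ← add_div, div_pow, Real.sq_sqrt (by linarith)]
    field_simp
    ring
  · rw [lt_div_iff₀ (by linarith)]
    linarith
  · rw [div_lt_iff₀ (by linarith)]
    linarith
end
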